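/- Let N_min < 1 be a non-random number such that N_t ≥ N_min almost surely for all t. Then the net wealth process {N_t} is a (1 − N_min, N_min)-sequential tail evidence against P: for all x > N_min, P(sup_t N_t ≥ x) ≤ (1 − N_min)/(x − N_min). -/

import Mathlib

open MeasureTheory

/-!
With `R t = lam t * X t`, the net wealth `N` satisfies
`N (t + 1) - N t = (W t + β (t + 1)) * R (t + 1)`: injected money raises wealth and liabilities
equally, so only the bets move `N`. Hence `N` is a martingale, although `W` is not. Ville's
inequality for the nonnegative martingale `N - Nmin` bounds the probability that `N` ever reaches
`y`, and letting `y` increase to `x` turns this into a bound for `x ≤ sup N`, where the supremum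
need not be attained.
-/

open Filter Topology
open scoped ENNReal

section TailEvidence

variable {Ω : Type*} {mΩ : MeasurableSpace Ω} {μ : Measure Ω} {a b : ℝ} {E : ℕ → Ω → ℝ}

/-- `E` is an `(a, b)`-sequential tail evidence against `μ`: a process whose running supremum has
an upper tail of order `a / (x - b)`. The supremum is taken in `EReal`, since `E` may be unbounded
along a path. -/
def IsSequentialTailEvidence (μ : Measure Ω) (a b : ℝ) (E : ℕ → Ω → ℝ) : Prop :=
  ∀ x : ℝ, b < x →
    μ {ω | (x : EReal) ≤ ⨆ t, (E t ω : EReal)} ≤ ENNReal.ofReal (a / (x - b))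

theorem isSequentialTailEvidence_of_measure_exists_le
    (hE : ∀ y, b < y → μ {ω | ∃ t, y ≤ E t ω} ≤ ENNReal.ofReal (a / (y - b))) :
    IsSequentialTailEvidence μ a b E := by
  intro x hx
  have hbound : ∀ y ∈ Set.Ioo b x,
      μ {ω | (x : EReal) ≤ ⨆ t, (E t ω : EReal)} ≤ ENNReal.ofReal (a / (y - b)) := by
    rintro y ⟨hby, hyx⟩
    refine (measure_mono fun ω hω => ?_).trans (hE y hby)
    obtain ⟨t, ht⟩ := lt_iSup_iff.1 ((EReal.coe_lt_coe_iff.2 hyx).trans_le hω)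
    exact ⟨t, (EReal.coe_lt_coe_iff.1 ht).le⟩
  have hlim : Tendsto (fun y => ENNReal.ofReal (a / (y - b))) (𝓝[<] x)
      (𝓝 (ENNReal.ofReal (a / (x - b)))) :=
    ENNReal.tendsto_ofReal <| Tendsto.mono_left
      (tendsto_const_nhds.div (tendsto_id.sub tendsto_const_nhds) (sub_pos.2 hx).ne')
      nhdsWithin_le_nhds
  exact ge_of_tendsto hlim (mem_of_superset (Ioo_mem_nhdsLT hx) hbound)

end TailEvidence

section Ville

variable {Ω : Type*} {mΩ : MeasurableSpace Ω} {μ : Measure Ω} {ℱ : Filtration ℕ mΩ}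
  {f : ℕ → Ω → ℝ}

theorem integral_stoppedValue_le_of_supermartingale [SigmaFiniteFiltration μ ℱ]
    (hf : Supermartingale f ℱ μ) {τ : Ω → ℕ∞} (hτ : IsStoppingTime ℱ τ) {n : ℕ}
    (hτn : ∀ ω, τ ω ≤ n) : ∫ ω, stoppedValue f τ ω ∂μ ≤ ∫ ω, f 0 ω ∂μ := by
  have h := hf.neg.expected_stoppedValue_mono (isStoppingTime_const ℱ 0) hτ
    (fun _ => zero_le) hτn
  simpa [stoppedValue, integral_neg] using h

theorem mul_measureReal_exists_le_le_integral_of_supermartingale [IsFiniteMeasure μ]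
    (hf : Supermartingale f ℱ μ) (hf_nonneg : ∀ t, 0 ≤ᵐ[μ] f t) {ε : ℝ} (hε : 0 ≤ ε) (n : ℕ) :
    ε * μ.real {ω | ∃ t ≤ n, ε ≤ f t ω} ≤ ∫ ω, f 0 ω ∂μ := by
  let τ : Ω → ℕ∞ := fun ω => (hittingBtwn f (Set.Ici ε) 0 n ω : ℕ)
  have hτ : IsStoppingTime ℱ τ :=
    hf.stronglyAdapted.adapted.isStoppingTime_hittingBtwn measurableSet_Ici
  have hτn : ∀ ω, τ ω ≤ n := fun ω => Nat.cast_le.2 (hittingBtwn_le ω)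
  have hsub : {ω | ∃ t ≤ n, ε ≤ f t ω} ⊆ {ω | ε ≤ stoppedValue f τ ω} :=
    fun _ ⟨t, htn, ht⟩ => stoppedValue_hittingBtwn_mem ⟨t, ⟨zero_le, htn⟩, ht⟩
  have hτ_nonneg : 0 ≤ᵐ[μ] stoppedValue f τ := by
    filter_upwards [ae_all_iff.2 hf_nonneg] with ω hω using hω _
  calc ε * μ.real {ω | ∃ t ≤ n, ε ≤ f t ω}
      ≤ ε * μ.real {ω | ε ≤ stoppedValue f τ ω} :=
        mul_le_mul_of_nonneg_left (measureReal_mono hsub) hε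
    _ ≤ ∫ ω, stoppedValue f τ ω ∂μ :=
        mul_meas_ge_le_integral_of_nonneg hτ_nonneg
          (integrable_stoppedValue ℕ hτ hf.integrable hτn) ε
    _ ≤ ∫ ω, f 0 ω ∂μ := integral_stoppedValue_le_of_supermartingale hf hτ hτn

theorem ville_ineq [IsFiniteMeasure μ]
    (hf : Supermartingale f ℱ μ) (hf_nonneg : ∀ t, 0 ≤ᵐ[μ] f t) {ε : ℝ} (hε : 0 < ε) :
    μ {ω | ∃ t, ε ≤ f t ω} ≤ ENNReal.ofReal ((∫ ω, f 0 ω ∂μ) / ε) := by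
  have hunion : {ω | ∃ t, ε ≤ f t ω} = ⋃ n : ℕ, {ω | ∃ t ≤ n, ε ≤ f t ω} := by
    ext ω
    simp only [Set.mem_ofPred_eq, Set.mem_iUnion]
    exact ⟨fun ⟨t, ht⟩ => ⟨t, t, le_rfl, ht⟩, fun ⟨_, t, _, ht⟩ => ⟨t, ht⟩⟩
  have hmono : Monotone fun n : ℕ => {ω | ∃ t ≤ n, ε ≤ f t ω} :=
    fun _ _ hnm _ ⟨t, htn, ht⟩ => ⟨t, htn.trans hnm, ht⟩
  rw [hunion, hmono.measure_iUnion]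
  refine iSup_le fun n => ?_
  rw [← ofReal_measureReal]
  refine ENNReal.ofReal_le_ofReal ((le_div_iff₀' hε).2 ?_)
  exact mul_measureReal_exists_le_le_integral_of_supermartingale hf hf_nonneg hε.le n

theorem isSequentialTailEvidence_of_supermartingale [IsFiniteMeasure μ]
    (hf : Supermartingale f ℱ μ) {c : ℝ} (hcf : ∀ t, ∀ᵐ ω ∂μ, c ≤ f t ω) :
    IsSequentialTailEvidence μ (∫ ω, (f 0 ω - c) ∂μ) c f := by
  refine isSequentialTailEvidence_of_measure_exists_le fun y hy => ?_
  have hshift : Supermartingale (f - fun _ _ => c) ℱ μ :=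
    hf.sub_martingale (martingale_const ℱ μ c)
  have hshift_nonneg : ∀ t, 0 ≤ᵐ[μ] f t - fun _ => c := fun t =>
    (hcf t).mono fun _ hω => sub_nonneg.2 hω
  simpa using ville_ineq hshift hshift_nonneg (sub_pos.2 hy)

end Ville

section NetWealth

variable {Ω : Type*} {mΩ : MeasurableSpace Ω} {μ : Measure Ω} {ℱ : Filtration ℕ mΩ}
  {X lam β G W M A : ℕ → Ω → ℝ}

theorem martingale_of_sub_eq_mul [IsFiniteMeasure μ]
    (hM_adapted : StronglyAdapted ℱ M) (hM_int : ∀ t, Integrable (M t) μ)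
    (hA : ∀ t, StronglyMeasurable[ℱ t] (A t))
    (hX_int : ∀ t, Integrable (X (t + 1)) μ) (hX_cond : ∀ t, μ[X (t + 1) | ℱ t] =ᵐ[μ] 0)
    (hM : ∀ t, M (t + 1) - M t = A t * X (t + 1)) : Martingale M ℱ μ := by
  refine martingale_of_condExp_sub_eq_zero_nat hM_adapted hM_int fun t => ?_
  have hAX_int : Integrable (A t * X (t + 1)) μ := hM t ▸ (hM_int (t + 1)).sub (hM_int t)
  calc μ[M (t + 1) - M t | ℱ t]
      = μ[A t * X (t + 1) | ℱ t] := by rw [hM t]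
    _ =ᵐ[μ] A t * μ[X (t + 1) | ℱ t] :=
        condExp_mul_of_stronglyMeasurable_left (hA t) hAX_int (hX_int t)
    _ =ᵐ[μ] A t * 0 := EventuallyEq.rfl.mul (hX_cond t)
    _ = 0 := mul_zero _

theorem stronglyAdapted_wealth (hW0 : StronglyMeasurable[ℱ 0] (W 0))
    (hβ : ∀ t, StronglyMeasurable[ℱ t] (β (t + 1)))
    (hG : ∀ t, StronglyMeasurable[ℱ (t + 1)] (G (t + 1)))
    (hW : ∀ t, W (t + 1) = (W t + β (t + 1)) * G (t + 1)) : StronglyAdapted ℱ W := by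
  intro t
  induction t with
  | zero => exact hW0
  | succ t ih =>
    rw [hW t]
    exact ((ih.add (hβ t)).mono (ℱ.mono t.le_succ)).mul (hG t)

theorem integrable_wealth (hW0 : Integrable (W 0) μ) (hβ : ∀ t, Integrable (β (t + 1)) μ)
    (hG : ∀ t, MemLp (G (t + 1)) ∞ μ)
    (hW : ∀ t, W (t + 1) = (W t + β (t + 1)) * G (t + 1)) (t : ℕ) : Integrable (W t) μ := by
  induction t with
  | zero => exact hW0
  | succ t ih =>
    rw [hW t]
    exact (ih.add (hβ t)).mul_of_top_left (hG t)

/-- The net wealth process: the wealth `W` minus the liabilities `β 1 + ⋯ + β t`, the total of the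
money injected up to time `t`. -/
def netWealth (W β : ℕ → Ω → ℝ) (t : ℕ) : Ω → ℝ :=
  W t - ∑ i ∈ Finset.range t, β (i + 1)

theorem netWealth_zero (W β : ℕ → Ω → ℝ) : netWealth W β 0 = W 0 := by
  simp [netWealth]

theorem netWealth_succ_sub_netWealth
    (hW : ∀ t, W (t + 1) = (W t + β (t + 1)) * (1 + lam (t + 1) * X (t + 1))) (t : ℕ) :
    netWealth W β (t + 1) - netWealth W β t =
      (W t + β (t + 1)) * lam (t + 1) * X (t + 1) := by
  simp only [netWealth, hW t, Finset.sum_range_succ]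
  ring

theorem stronglyAdapted_netWealth (hW : StronglyAdapted ℱ W)
    (hβ : ∀ t, StronglyMeasurable[ℱ t] (β (t + 1))) : StronglyAdapted ℱ (netWealth W β) :=
  fun t => (hW t).sub <| Finset.stronglyMeasurable_sum _ fun i hi =>
    (hβ i).mono (ℱ.mono (Finset.mem_range.1 hi).le)

theorem integrable_netWealth {t : ℕ} (hW : Integrable (W t) μ)
    (hβ : ∀ i, Integrable (β (i + 1)) μ) : Integrable (netWealth W β t) μ :=
  hW.sub (integrable_finsetSum' _ fun i _ => hβ i)

theorem martingale_netWealth [IsFiniteMeasure μ]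
    (hX_meas : ∀ t, StronglyMeasurable[ℱ (t + 1)] (X (t + 1)))
    (hX_int : ∀ t, Integrable (X (t + 1)) μ)
    (hX_cond : ∀ t, μ[X (t + 1) | ℱ t] =ᵐ[μ] 0)
    (hlam_pred : ∀ t, StronglyMeasurable[ℱ t] (lam (t + 1)))
    (hlamX_bdd : ∀ t, MemLp (lam (t + 1) * X (t + 1)) ∞ μ)
    (hβ_pred : ∀ t, StronglyMeasurable[ℱ t] (β (t + 1)))
    (hβ_int : ∀ t, Integrable (β (t + 1)) μ)
    (hW0_meas : StronglyMeasurable[ℱ 0] (W 0)) (hW0_int : Integrable (W 0) μ)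
    (hW : ∀ t, W (t + 1) = (W t + β (t + 1)) * (1 + lam (t + 1) * X (t + 1))) :
    Martingale (netWealth W β) ℱ μ := by
  have hG_meas : ∀ t, StronglyMeasurable[ℱ (t + 1)] (1 + lam (t + 1) * X (t + 1)) := fun t =>
    stronglyMeasurable_one.add (((hlam_pred t).mono (ℱ.mono t.le_succ)).mul (hX_meas t))
  have hG_bdd : ∀ t, MemLp (1 + lam (t + 1) * X (t + 1)) ∞ μ := fun t =>
    (memLp_top_const (1 : ℝ)).add (hlamX_bdd t)
  have hW_adapted : StronglyAdapted ℱ W :=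
    stronglyAdapted_wealth (G := fun t => 1 + lam t * X t) hW0_meas hβ_pred hG_meas hW
  have hW_int : ∀ t, Integrable (W t) μ :=
    integrable_wealth (G := fun t => 1 + lam t * X t) hW0_int hβ_int hG_bdd hW
  exact martingale_of_sub_eq_mul (A := fun t => (W t + β (t + 1)) * lam (t + 1))
    (stronglyAdapted_netWealth hW_adapted hβ_pred)
    (fun t => integrable_netWealth (hW_int t) hβ_int)
    (fun t => ((hW_adapted t).add (hβ_pred t)).mul (hlam_pred t)) hX_int hX_cond
    (netWealth_succ_sub_netWealth hW)

theorem net_wealth_sequential_tail_evidence_general [IsFiniteMeasure μ]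
    (hX_meas : ∀ t, StronglyMeasurable[ℱ (t + 1)] (X (t + 1)))
    (hX_int : ∀ t, Integrable (X (t + 1)) μ)
    (hX_cond : ∀ t, μ[X (t + 1) | ℱ t] =ᵐ[μ] 0)
    (hlam_pred : ∀ t, StronglyMeasurable[ℱ t] (lam (t + 1)))
    (hlamX_bdd : ∀ t, MemLp (lam (t + 1) * X (t + 1)) ∞ μ)
    (hβ_pred : ∀ t, StronglyMeasurable[ℱ t] (β (t + 1)))
    (hβ_int : ∀ t, Integrable (β (t + 1)) μ)
    (hW0_meas : StronglyMeasurable[ℱ 0] (W 0)) (hW0_int : Integrable (W 0) μ)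
    (hW : ∀ t, W (t + 1) = (W t + β (t + 1)) * (1 + lam (t + 1) * X (t + 1)))
    {Nmin : ℝ} (hN_lb : ∀ t, ∀ᵐ ω ∂μ, Nmin ≤ netWealth W β t ω) :
    IsSequentialTailEvidence μ (∫ ω, (W 0 ω - Nmin) ∂μ) Nmin (netWealth W β) := by
  have hN_mart : Martingale (netWealth W β) ℱ μ :=
    martingale_netWealth hX_meas hX_int hX_cond hlam_pred hlamX_bdd hβ_pred hβ_int
      hW0_meas hW0_int hW
  rw [← netWealth_zero W β]
  exact isSequentialTailEvidence_of_supermartingale hN_mart.supermartingale hN_lb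

end NetWealth

/-- If the net wealth process is a.s. bounded below by `Nmin < 1` at every time, then it
is a `(1 - Nmin, Nmin)`-sequential tail evidence against `P`. -/
theorem net_wealth_sequential_tail_evidence
    {Ω : Type*} {mΩ : MeasurableSpace Ω} {μ : Measure Ω} [IsProbabilityMeasure μ]
    (ℱ : Filtration ℕ mΩ)
    (X lam β W L N : ℕ → Ω → ℝ)
    (hX_val : ∀ t ω, X (t + 1) ω = 1 ∨ X (t + 1) ω = -1)
    (hX_meas : ∀ t, StronglyMeasurable[ℱ (t + 1)] (X (t + 1)))
    (hX_cond : ∀ t, μ[X (t + 1) | ℱ t] =ᵐ[μ] 0)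
    (hlam_pred : ∀ t, StronglyMeasurable[ℱ t] (lam (t + 1)))
    (hlam_bdd : ∀ t ω, lam (t + 1) ω ∈ Set.Icc (-1 : ℝ) 1)
    (hβ_pred : ∀ t, StronglyMeasurable[ℱ t] (β (t + 1)))
    (hβ_int : ∀ t, Integrable (β (t + 1)) μ)
    (hβ_lb : ∀ t ω, -(W t ω) ≤ β (t + 1) ω)
    (hW0 : ∀ ω, W 0 ω = 1)
    (hW : ∀ t ω, W (t + 1) ω = (W t ω + β (t + 1) ω) * (1 + lam (t + 1) ω * X (t + 1) ω))
    (hL : ∀ t ω, L t ω = ∑ i ∈ Finset.range t, β (i + 1) ω)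
    (hN : ∀ t ω, N t ω = W t ω - L t ω)
    (Nmin : ℝ) (hNmin : Nmin < 1)
    (hN_lb : ∀ t, ∀ᵐ ω ∂μ, Nmin ≤ N t ω) :
    ∀ x : ℝ, Nmin < x →
      μ {ω | (x : EReal) ≤ ⨆ t, (N t ω : EReal)} ≤
        ENNReal.ofReal ((1 - Nmin) / (x - Nmin)) := by
  have hX_memLp : ∀ t, MemLp (X (t + 1)) ∞ μ := fun t =>
    memLp_of_bounded (a := -1) (b := 1)
      (ae_of_all μ fun ω => by rcases hX_val t ω with h | h <;> simp [h])
      ((hX_meas t).mono (ℱ.le _)).aestronglyMeasurable ∞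
  have hlam_memLp : ∀ t, MemLp (lam (t + 1)) ∞ μ := fun t =>
    memLp_of_bounded (ae_of_all μ (hlam_bdd t))
      ((hlam_pred t).mono (ℱ.le t)).aestronglyMeasurable ∞
  have hN_eq : N = netWealth W β := by
    ext t ω
    simp [netWealth, hN, hL]
  subst hN_eq
  intro x hx
  simpa [hW0] using net_wealth_sequential_tail_evidence_general hX_meas
    (fun t => (hX_memLp t).integrable le_top) hX_cond hlam_pred
    (fun t => (hX_memLp t).mul (hlam_memLp t)) hβ_pred hβ_int (funext hW0 ▸ stronglyMeasurable_one)
    (funext hW0 ▸ integrable_const 1) (fun t => funext (hW t)) hN_lb x hx
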